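/- Fix M ≥ 1 and q ≥ 1. Let g be any AutoSF-style block assignment: for each pair (i, j) ∈ {1,...,M}², g assigns either zero or a signed relation-segment index (s_{ij}, k_{ij}) with s_{ij} ∈ {−1, 1} and k_{ij} ∈ {1,...,M}, and the resulting bilinear scoring function of vectors r, h, t ∈ ℝ^{Mq} (partitioned into M segments of length q) is f(h, r, t) = Σ_{(i,j) assigned} s_{ij} · ⟨r^{(k_{ij})}, h^{(i)}, t^{(j)}⟩. Then f equals the S2S binary score f_z(r, h, t; Z) for the sparse core tensor Z with m = M segments whose block Z_{k_{ij}, i, j} = s_{ij} · I_1^2 for each assigned pair (i, j) and whose remaining blocks are I_0^2. In particular, every scoring function in the AutoSF search space lies in the S2S binary search space. -/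

import Mathlib

open Finset

/-- The `j`-th segment (of length `q`) of a vector in `ℝ^(M·q)`:
coordinates `(j-1)q+1` through `jq` (1-based), i.e. `j·q, …, j·q + q - 1` (0-based). -/
def seg (M q : ℕ) (v : Fin (M * q) → ℝ) (j : Fin M) : Fin q → ℝ :=
  fun k => v (finProdFinEquiv (j, k))

/-- Multilinear inner product of `n+1` vectors in `ℝ^q`. -/
def mip (n q : ℕ) (v : Fin (n + 1) → Fin q → ℝ) : ℝ :=
  ∑ k : Fin q, ∏ i : Fin (n + 1), v i k

/-- The `(n+1)`-order superdiagonal tensor `I_v^n` of size `q` in each mode: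
`v` when all indices coincide, `0` elsewhere. -/
def diagT (n q : ℕ) (v : ℝ) : (Fin (n + 1) → Fin q) → ℝ :=
  fun k => if ∀ i, k i = k 0 then v else 0

/-- Tucker product of an `(n+1)`-order tensor of size `q` in each mode with
vectors `u 0, …, u n ∈ ℝ^q`. -/
def tucker (n q : ℕ) (G : (Fin (n + 1) → Fin q) → ℝ)
    (u : Fin (n + 1) → Fin q → ℝ) : ℝ :=
  ∑ k : Fin (n + 1) → Fin q, G k * ∏ i : Fin (n + 1), u i (k i)

/-- S2S score of vectors `vs 0 = r, vs 1 = e_1, …, vs n = e_n ∈ ℝ^(m·q)` with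
an S2S core tensor `Z` for arity `n` with `m` segments of size `q`. -/
def s2sScore (n m q : ℕ)
    (Z : (Fin (n + 1) → Fin m) → (Fin (n + 1) → Fin q) → ℝ)
    (vs : Fin (n + 1) → Fin (m * q) → ℝ) : ℝ :=
  ∑ j : Fin (n + 1) → Fin m, tucker n q (Z j) (fun i => seg m q (vs i) (j i))

/-- S2S score computed on the first `m` segments of vectors in `ℝ^(M·q)` (`m ≤ M`). -/
def s2sScoreFirst (n m M q : ℕ) (h : m ≤ M)
    (Z : (Fin (n + 1) → Fin m) → (Fin (n + 1) → Fin q) → ℝ)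
    (vs : Fin (n + 1) → Fin (M * q) → ℝ) : ℝ :=
  ∑ j : Fin (n + 1) → Fin m,
    tucker n q (Z j) (fun i => seg M q (vs i) (Fin.castLE h (j i)))

/-- A sparse core tensor: every block lies in `{-I_1^n, I_0^n, I_1^n}`. -/
def SparseCore (n m q : ℕ)
    (Z : (Fin (n + 1) → Fin m) → (Fin (n + 1) → Fin q) → ℝ) : Prop :=
  ∀ j, Z j = diagT n q (-1) ∨ Z j = diagT n q 0 ∨ Z j = diagT n q 1

/-!
A superdiagonal block contracts its arguments to a scalar multiple of their multilinear inner
product, so a core tensor with superdiagonal blocks scores like a linear combination of multilinear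
inner products of segments, with one coefficient per tuple of segments. For each tuple of entity
segments, the coefficients coming from an AutoSF assignment are concentrated on at most one relation
segment, and the sum over relation segments collapses to the AutoSF term.
-/

section SuperdiagonalBlocks

variable {n q : ℕ}

theorem diagT_const (v : ℝ) (x : Fin q) : diagT n q v (Function.const _ x) = v :=
  if_pos fun _ => rfl

theorem diagT_of_notMem_range_const (v : ℝ) {k : Fin (n + 1) → Fin q}
    (hk : k ∉ Set.range (Function.const (Fin (n + 1)))) : diagT n q v k = 0 :=
  if_neg fun h => hk ⟨k 0, funext fun i => (h i).symm⟩

theorem tucker_diagT (v : ℝ) (u : Fin (n + 1) → Fin q → ℝ) :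
    tucker n q (diagT n q v) u = v * mip n q u := by
  rw [tucker, mip, Finset.mul_sum]
  refine (Fintype.sum_of_injective (Function.const _) Function.const_injective _ _ ?_ ?_).symm
  · intro k hk
    rw [diagT_of_notMem_range_const v hk, zero_mul]
  · intro x
    rw [diagT_const]
    rfl

theorem mip_two (v : Fin 3 → Fin q → ℝ) : mip 2 q v = ∑ x, v 0 x * v 1 x * v 2 x :=
  Finset.sum_congr rfl fun x _ => Fin.prod_univ_three fun i => v i x

theorem s2sScore_diagT {m : ℕ} (c : (Fin (n + 1) → Fin m) → ℝ)
    (vs : Fin (n + 1) → Fin (m * q) → ℝ) :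
    s2sScore n m q (fun j => diagT n q (c j)) vs
      = ∑ j, c j * mip n q (fun l => seg m q (vs l) (j l)) :=
  Finset.sum_congr rfl fun _ _ => tucker_diagT _ _

end SuperdiagonalBlocks

section TupleSums

variable {α β : Type*} [Fintype α] [AddCommMonoid β]

theorem sum_fin_succ_arrow {n : ℕ} (F : (Fin (n + 1) → α) → β) :
    ∑ f, F f = ∑ f : Fin n → α, ∑ a, F (Fin.cons a f) := by
  rw [← (Fin.consEquiv fun _ => α).sum_comp, Fintype.sum_prod_type_right]
  rfl

theorem sum_fin_two_arrow (F : (Fin 2 → α) → β) : ∑ f, F f = ∑ a, ∑ b, F ![a, b] := by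
  rw [← (finTwoArrowEquiv α).symm.sum_comp, Fintype.sum_prod_type]
  rfl

end TupleSums

section Assignments

section Coefficients

variable {α : Type*} [DecidableEq α]

/-- The coefficient that one entry of a block assignment gives to the relation segment `a`: the sign
`s` if the entry is the signed index `(s, a)`, and `0` otherwise. -/
def assignmentCoeff (o : Option (ℝ × α)) (a : α) : ℝ :=
  o.elim 0 fun p => if a = p.2 then p.1 else 0

theorem assignmentCoeff_mem_signs {o : Option (ℝ × α)}
    (ho : ∀ s k, o = some (s, k) → s = 1 ∨ s = -1) (a : α) :
    assignmentCoeff o a = -1 ∨ assignmentCoeff o a = 0 ∨ assignmentCoeff o a = 1 := by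
  rcases o with _ | ⟨s, k⟩
  · exact .inr (.inl rfl)
  · by_cases hak : a = k
    · rcases ho s k rfl with rfl | rfl <;> simp [assignmentCoeff, hak]
    · simp [assignmentCoeff, hak]

theorem sum_assignmentCoeff_mul [Fintype α] (o : Option (ℝ × α)) (F : α → ℝ) :
    ∑ a, assignmentCoeff o a * F a = o.elim 0 fun p => p.1 * F p.2 := by
  rcases o with _ | p <;> simp [assignmentCoeff]

end Coefficients

variable {n m q : ℕ}

/-- The core tensor of an assignment `g` of signed relation segments to tuples of entity segments.
Index `0` of a block is the relation segment, and the remaining indices are the entity segments. -/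
def assignmentCore (q : ℕ) (g : (Fin n → Fin m) → Option (ℝ × Fin m)) :
    (Fin (n + 1) → Fin m) → (Fin (n + 1) → Fin q) → ℝ :=
  fun j => diagT n q (assignmentCoeff (g (Fin.tail j)) (j 0))

/-- The AutoSF-style scoring function of an assignment `g`, for `n` entities: argument `0` is the
relation, and the remaining arguments are the entities. -/
def assignmentScore (q : ℕ) (g : (Fin n → Fin m) → Option (ℝ × Fin m))
    (vs : Fin (n + 1) → Fin (m * q) → ℝ) : ℝ :=
  ∑ i, (g i).elim 0 fun p =>
    p.1 * mip n q fun l => seg m q (vs l) (Fin.cons (α := fun _ => Fin m) p.2 i l)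

theorem sparseCore_assignmentCore {g : (Fin n → Fin m) → Option (ℝ × Fin m)}
    (hg : ∀ i s k, g i = some (s, k) → s = 1 ∨ s = -1) :
    SparseCore n m q (assignmentCore q g) := fun j =>
  (assignmentCoeff_mem_signs (hg _) (j 0)).imp (congrArg _) (.imp (congrArg _) (congrArg _))

theorem s2sScore_assignmentCore (g : (Fin n → Fin m) → Option (ℝ × Fin m))
    (vs : Fin (n + 1) → Fin (m * q) → ℝ) :
    s2sScore n m q (assignmentCore q g) vs = assignmentScore q g vs := by
  unfold assignmentCore assignmentScore
  rw [s2sScore_diagT, sum_fin_succ_arrow]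
  simp only [Fin.tail_cons, Fin.cons_zero, sum_assignmentCoeff_mul]

theorem assignmentScore_two (g : (Fin 2 → Fin m) → Option (ℝ × Fin m))
    (r h t : Fin (m * q) → ℝ) :
    assignmentScore q g ![r, h, t]
      = ∑ i, ∑ j, (g ![i, j]).elim 0 fun p =>
          p.1 * mip 2 q ![seg m q r p.2, seg m q h i, seg m q t j] := by
  simp only [assignmentScore, sum_fin_two_arrow, mip_two]
  rfl

end Assignments

theorem autoSF_in_s2s_search_space_general (n m q : ℕ)
    (g : (Fin n → Fin m) → Option (ℝ × Fin m))
    (hg : ∀ i s k, g i = some (s, k) → s = 1 ∨ s = -1) :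
    SparseCore n m q (assignmentCore q g) ∧
    ∀ vs : Fin (n + 1) → Fin (m * q) → ℝ,
      s2sScore n m q (assignmentCore q g) vs = assignmentScore q g vs :=
  ⟨sparseCore_assignmentCore hg, s2sScore_assignmentCore g⟩

/-- every AutoSF-style bilinear scoring function lies in the S2S binary
search space. The assignment `g` maps each pair of entity-segment positions `(i, j)`
either to nothing (zero) or to a signed relation-segment index `(s, k)` with
`s ∈ {-1, 1}`; the induced scoring function is
`f(h, r, t) = Σ_{(i,j) assigned} s_{ij} ⟨r^(k_{ij}), h^(i), t^(j)⟩`. The core tensor `Z`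
with block `Z_{k_{ij}, i, j} = s_{ij}·I_1^2` for each assigned pair and `I_0^2` elsewhere
is sparse, and its S2S binary score equals `f`. -/
theorem autoSF_in_s2s_search_space (M q : ℕ) (hM : 1 ≤ M) (hq : 1 ≤ q)
    (g : Fin M → Fin M → Option (ℝ × Fin M))
    (hg : ∀ (i j : Fin M) (s : ℝ) (k : Fin M), g i j = some (s, k) → s = 1 ∨ s = -1)
    (Z : (Fin 3 → Fin M) → (Fin 3 → Fin q) → ℝ)
    (hZ : ∀ jidx : Fin 3 → Fin M, Z jidx =
      match g (jidx 1) (jidx 2) with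
      | some (s, k) => if jidx 0 = k then diagT 2 q s else diagT 2 q 0
      | none => diagT 2 q 0) :
    SparseCore 2 M q Z ∧
    ∀ r h t : Fin (M * q) → ℝ,
      s2sScore 2 M q Z ![r, h, t]
        = ∑ i : Fin M, ∑ j : Fin M,
            (match g i j with
             | some (s, k) => s * mip 2 q ![seg M q r k, seg M q h i, seg M q t j]
             | none => 0) := by
  obtain rfl : Z = assignmentCore q fun i => g (i 0) (i 1) := by
    funext j
    change Z j = diagT 2 q (assignmentCoeff (g (j 1) (j 2)) (j 0))
    rw [hZ j]
    rcases g (j 1) (j 2) with _ | ⟨s, k⟩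
    · rfl
    · exact (apply_ite (diagT 2 q) _ _ _).symm
  obtain ⟨sparse, score⟩ := autoSF_in_s2s_search_space_general 2 M q _ fun _ => hg _ _
  refine ⟨sparse, fun r h t => ?_⟩
  rw [score, assignmentScore_two]
  refine Finset.sum_congr rfl fun i _ => Finset.sum_congr rfl fun j _ => ?_
  change (g i j).elim _ _ = _
  rcases g i j with _ | ⟨s, k⟩ <;> rfl
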